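/- arXiv:1301.6419 — 2 statements merged into one kernel-verified Lean document; each statement's English description precedes it below -/
import Mathlib

section
/- Let p be a prime, let T be the p-ary rooted tree, and let H be a group of automorphisms of T that acts on each layer L_n as a p-group (i.e. the image of H in the symmetric group on L_n is a finite p-group). Then for every n the number of H-orbits on L_n is congruent to 1 modulo p−1. Moreover, if in addition H is a subgroup of finite index in a branch group on T, then b(H) ≡ 1 (mod p−1). -/
/-!  Common definitions: rooted trees of type `(m n)`, tree automorphisms,
rigid stabilizers, branch groups, and auxiliary notions. -/

universe u

/-- Vertices of the rooted tree of type `m`: finite sequences `(x_0, …, x_{n-1})`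
with `x_i ∈ {1, …, m i}` (encoded as `Fin (m i)`). -/
def Vertex (m : ℕ → ℕ) : Type := Σ n : ℕ, ∀ i : Fin n, Fin (m i)

namespace Vertex

variable {m : ℕ → ℕ}

/-- The level of a vertex: its length. -/
def level (v : Vertex m) : ℕ := v.1

/-- `v` is a (weak) prefix of `w`; i.e. `w` lies in the subtree `T_v`
(`w = v` or `w` is a descendant of `v`). -/
def IsPrefix (v w : Vertex m) : Prop :=
  ∃ h : v.1 ≤ w.1, ∀ i : Fin v.1, w.2 (Fin.castLE h i) = v.2 i

/-- `w` is a child (one-step extension) of `v`. -/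
def IsChild (v w : Vertex m) : Prop := w.1 = v.1 + 1 ∧ IsPrefix v w

end Vertex

/-- The `n`-th layer `L_n` of the tree: all vertices of level `n`. -/
def layer (m : ℕ → ℕ) (n : ℕ) : Set (Vertex m) := {v | v.1 = n}

section Rist

variable {m : ℕ → ℕ} (G : Type*) [Group G] [MulAction G (Vertex m)]

/-- The rigid stabilizer of a vertex `v`: all elements fixing every vertex
outside the subtree `T_v`. -/
def rist (v : Vertex m) : Subgroup G :=
  ⨅ w ∈ {w : Vertex m | ¬ Vertex.IsPrefix v w}, MulAction.stabilizer G w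

/-- The subgroup generated by the rigid stabilizers of the vertices in `X`. -/
def ristSet (X : Set (Vertex m)) : Subgroup G := ⨆ v ∈ X, rist G v

/-- `rist_G(n)`, the rigid stabilizer of the `n`-th layer. -/
def ristLayer (m : ℕ → ℕ) (G : Type*) [Group G] [MulAction G (Vertex m)] (n : ℕ) :
    Subgroup G :=
  ristSet G (layer m n)

/-- The orbit of the vertex `v` under a subgroup `H ≤ G`. -/
def subOrbit (H : Subgroup G) (v : Vertex m) : Set (Vertex m) :=
  {w | ∃ h ∈ H, h • v = w}

/-- The set of orbits of a subgroup `H ≤ G` on a set `X` of vertices. -/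
def orbitsOn (H : Subgroup G) (X : Set (Vertex m)) : Set (Set (Vertex m)) :=
  (fun v => subOrbit G H v) '' X

end Rist

/-- `G` is a branch group on the rooted tree of type `m` (with respect to the given
action): the action is faithful and by tree automorphisms, `G` acts transitively on
each layer, and each `rist_G(n)` has finite index in `G`. -/
structure IsBranchGroup (m : ℕ → ℕ) (G : Type*) [Group G] [MulAction G (Vertex m)] :
    Prop where
  faithful : ∀ g : G, (∀ v : Vertex m, g • v = v) → g = 1
  aut : ∀ (g : G) (v w : Vertex m), Vertex.IsChild v w ↔ Vertex.IsChild (g • v) (g • w)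
  trans : ∀ v w : Vertex m, v.1 = w.1 → ∃ g : G, g • v = w
  ristFiniteIndex : ∀ n : ℕ, (ristLayer m G n).FiniteIndex

/-- A group is virtually soluble if it has a soluble subgroup of finite index. -/
def VirtuallySolvable (Γ : Type*) [Group Γ] : Prop :=
  ∃ S : Subgroup Γ, S.FiniteIndex ∧ IsSolvable ↥S

/-- A group is virtually abelian if it has an abelian subgroup of finite index. -/
def VirtuallyAbelian (Γ : Type*) [Group Γ] : Prop :=
  ∃ S : Subgroup Γ, S.FiniteIndex ∧ ∀ a ∈ S, ∀ b ∈ S, a * b = b * a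

/-- For subgroups `A ≤ B` of a group with `A` normalised by `B`, this says that the
factor `B/A` belongs to the class `𝔛`. -/
def FactorIn (𝔛 : (Γ : Type u) → [inst : Group Γ] → Prop) {G : Type u} [Group G]
    (A B : Subgroup G) : Prop :=
  ∃ hn : (A.subgroupOf B).Normal, letI := hn; 𝔛 (↥B ⧸ A.subgroupOf B)

/-- The factor `B/A` is virtually soluble. -/
def FactorVirtuallySolvable {G : Type*} [Group G] (A B : Subgroup G) : Prop :=
  ∃ hn : (A.subgroupOf B).Normal,
    letI := hn; VirtuallySolvable (↥B ⧸ A.subgroupOf B)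

/-- The factor `B/A` is virtually abelian. -/
def FactorVirtuallyAbelian {G : Type*} [Group G] (A B : Subgroup G) : Prop :=
  ∃ hn : (A.subgroupOf B).Normal,
    letI := hn; VirtuallyAbelian (↥B ⧸ A.subgroupOf B)

/-- `Γ` has `r` infinite normal subgroups that generate their direct product in `Γ`:
each of them intersects trivially the subgroup generated by the others. -/
def HasIndepFamily (Γ : Type*) [Group Γ] (r : ℕ) : Prop :=
  ∃ N : Fin r → Subgroup Γ, (∀ i, (N i).Normal) ∧ (∀ i, Infinite ↥(N i)) ∧
    ∀ i, N i ⊓ (⨆ j ∈ ({i}ᶜ : Set (Fin r)), N j) = ⊥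

/-!
The orbits of `H` on `L_n` have `p`-power size, hence size `≡ 1` modulo `p - 1`, so the number of
orbits is congruent to `|L_n| ≡ 1`.

For `b(H)`, the rigid stabilizers of the vertices in a single orbit on `L_n` generate a normal
subgroup, and these subgroups for the different orbits are independent and infinite, so `b(H)` is at
least the number of orbits on `L_n`. Conversely, a normal subgroup that moves `v` contains
`⁅rist v, rist v⁆ ≠ 1`, so independent normal subgroups move vertices from different orbits on every
deep enough layer. The number of orbits on a layer is at most the index of `H` in the
layer-transitive group `G`, so its maximum is attained, and this maximum is `b(H)`.

The rigid stabilizers are infinite: those of the vertices on one layer are conjugate in `G`, commute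
with each other and generate a subgroup of finite index in the infinite group `G`.
-/

open MulAction Filter
open scoped commutatorElement

section GroupAction

variable {Γ α : Type*} [Group Γ] [MulAction Γ α]

theorem eq_one_of_forall_smul_eq [FaithfulSMul Γ α] {g : Γ} (hg : ∀ a : α, g • a = a) : g = 1 :=
  eq_of_smul_eq_smul fun a : α => by rw [hg, one_smul]

theorem exists_not_le_stabilizer [FaithfulSMul Γ α] {K : Subgroup Γ} (hK : K ≠ ⊥) :
    ∃ a : α, ¬ K ≤ stabilizer Γ a := by
  contrapose! hK
  exact (Subgroup.eq_bot_iff_forall K).2 fun g hg => eq_one_of_forall_smul_eq fun a : α => hK a hg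

theorem le_stabilizer_smul {K : Subgroup Γ} [hK : K.Normal] {a : α} (ha : K ≤ stabilizer Γ a)
    (g : Γ) : K ≤ stabilizer Γ (g • a) := by
  intro k hk
  have hfix : (g⁻¹ * k * g) • a = a := ha (by simpa using hK.conj_mem k hk g⁻¹)
  simpa [mul_smul, inv_smul_eq_iff] using hfix

end GroupAction

namespace Vertex

variable {m : ℕ → ℕ} {u v w : Vertex m}

theorem IsPrefix.refl (v : Vertex m) : IsPrefix v v := ⟨le_rfl, fun _ => rfl⟩

theorem IsPrefix.trans : IsPrefix u v → IsPrefix v w → IsPrefix u w := by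
  rintro ⟨huv, hu⟩ ⟨hvw, hv⟩
  exact ⟨huv.trans hvw, fun i => (hv (i.castLE huv)).trans (hu i)⟩

theorem IsPrefix.eq_of_level_eq : IsPrefix u w → IsPrefix v w → u.1 = v.1 → u = v := by
  obtain ⟨n, f⟩ := u
  obtain ⟨k, g⟩ := v
  rintro ⟨_, hu⟩ ⟨_, hv⟩ (rfl : n = k)
  exact congrArg (Sigma.mk n) (funext fun i => (hu i).symm.trans (hv i))

/-- The prefix of length `n` of the vertex `w`. -/
def truncate (w : Vertex m) (n : ℕ) (hn : n ≤ w.1) : Vertex m := ⟨n, fun i => w.2 (i.castLE hn)⟩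

theorem truncate_isPrefix {n : ℕ} (hn : n ≤ w.1) : IsPrefix (w.truncate n hn) w :=
  ⟨hn, fun _ => rfl⟩

theorem isChild_truncate_succ {n : ℕ} (hn : n + 1 ≤ w.1) :
    IsChild (w.truncate n (Nat.le_of_succ_le hn)) (w.truncate (n + 1) hn) :=
  ⟨rfl, Nat.le_succ n, fun _ => rfl⟩

theorem IsPrefix.reflTransGen_isChild (h : IsPrefix v w) : Relation.ReflTransGen IsChild v w := by
  suffices ∀ n, v.1 ≤ n → ∀ hn : n ≤ w.1, Relation.ReflTransGen IsChild v (w.truncate n hn) from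
    this w.1 h.1 le_rfl
  intro n hvn
  induction n, hvn using Nat.le_induction with
  | base =>
    intro hn
    rw [← h.eq_of_level_eq (truncate_isPrefix hn) rfl]
  | succ n _ ih => exact fun hn => (ih (Nat.le_of_succ_le hn)).tail (isChild_truncate_succ hn)

theorem isPrefix_of_reflTransGen_isChild (h : Relation.ReflTransGen IsChild v w) :
    IsPrefix v w := by
  induction h with
  | refl => exact .refl v
  | tail _ h ih => exact ih.trans h.2

theorem exists_isPrefix_mem_layer (hm : ∀ i, 0 < m i) (v : Vertex m) {n : ℕ} (hn : v.1 ≤ n) :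
    ∃ w ∈ layer m n, IsPrefix v w :=
  ⟨⟨n, fun i => if hi : i.1 < v.1 then v.2 ⟨i, hi⟩ else ⟨0, hm i⟩⟩, rfl, hn, fun i => by simp⟩

end Vertex

open Vertex

section Layer

variable (m : ℕ → ℕ) (n : ℕ)

/-- The `n`-th layer is the set of sequences of length `n`. -/
def layerEquiv : layer m n ≃ ∀ i : Fin n, Fin (m i) where
  toFun v := v.2 ▸ v.1.2
  invFun f := ⟨⟨n, f⟩, rfl⟩
  left_inv := by
    rintro ⟨⟨_, _⟩, rfl⟩
    rfl
  right_inv _ := rfl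

instance finite_layer : Finite (layer m n) := .of_equiv _ (layerEquiv m n).symm

theorem card_layer : Nat.card (layer m n) = ∏ i : Fin n, m i := by
  simp [Nat.card_congr (layerEquiv m n)]

variable {m} in
theorem lt_card_layer (hm : ∀ i, 1 < m i) : n < Nat.card (layer m n) :=
  calc
    n < 2 ^ n := n.lt_two_pow_self
    _ ≤ ∏ i : Fin n, m i := by
      simpa using Finset.pow_card_le_prod Finset.univ (fun i : Fin n => m i) 2 fun i _ => hm i
    _ = Nat.card (layer m n) := (card_layer m n).symm

end Layer

/-- The group `Γ` acts on the rooted tree of type `m` by tree automorphisms. -/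
def IsTreeAction (m : ℕ → ℕ) (Γ : Type*) [Group Γ] [MulAction Γ (Vertex m)] : Prop :=
  ∀ (g : Γ) (v w : Vertex m), IsChild v w ↔ IsChild (g • v) (g • w)

namespace IsTreeAction

variable {m : ℕ → ℕ} {Γ : Type*} [Group Γ] [MulAction Γ (Vertex m)] (hΓ : IsTreeAction m Γ)
include hΓ

theorem subgroup (H : Subgroup Γ) : IsTreeAction m H := fun h => hΓ h

theorem isPrefix_smul (g : Γ) {v w : Vertex m} (h : IsPrefix v w) : IsPrefix (g • v) (g • w) :=
  isPrefix_of_reflTransGen_isChild <|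
    h.reflTransGen_isChild.lift (g • ·) fun u u' => (hΓ g u u').1

theorem isPrefix_smul_iff (g : Γ) {v w : Vertex m} :
    IsPrefix (g • v) (g • w) ↔ IsPrefix v w :=
  ⟨fun h => by simpa using hΓ.isPrefix_smul g⁻¹ h, hΓ.isPrefix_smul g⟩

theorem level_le_level_smul (g : Γ) (v : Vertex m) : v.1 ≤ (g • v).1 := by
  obtain ⟨root, hroot, hv⟩ : ∃ u : Vertex m, u.1 = 0 ∧ Relation.ReflTransGen IsChild u v :=
    ⟨_, rfl, (truncate_isPrefix v.1.zero_le).reflTransGen_isChild⟩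
  induction hv with
  | refl => exact hroot ▸ Nat.zero_le _
  | tail _ h ih =>
    rw [h.1, ((hΓ g _ _).1 h).1]
    exact Nat.succ_le_succ ih

theorem level_smul (g : Γ) (v : Vertex m) : (g • v).1 = v.1 :=
  le_antisymm (by simpa using hΓ.level_le_level_smul g⁻¹ (g • v)) (hΓ.level_le_level_smul g v)

theorem orbit_subset_layer {n : ℕ} {v : Vertex m} (hv : v ∈ layer m n) : orbit Γ v ⊆ layer m n :=
  Set.range_subset_iff.2 fun g => (hΓ.level_smul g v).trans hv

end IsTreeAction

section Rist

variable {m : ℕ → ℕ} {Γ : Type*} [Group Γ] [MulAction Γ (Vertex m)]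

theorem mem_rist_iff {v : Vertex m} {g : Γ} : g ∈ rist Γ v ↔ ∀ w, ¬ IsPrefix v w → g • w = w := by
  simp [rist, Subgroup.mem_iInf]

theorem rist_antitone {v w : Vertex m} (h : IsPrefix v w) : rist Γ w ≤ rist Γ v :=
  fun _ hg => mem_rist_iff.2 fun u hu => mem_rist_iff.1 hg u fun hwu => hu (h.trans hwu)

theorem rist_subgroup (H : Subgroup Γ) (v : Vertex m) : rist H v = (rist Γ v).subgroupOf H := by
  ext h
  simp only [Subgroup.mem_subgroupOf, mem_rist_iff, Subgroup.smul_def]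

theorem rist_le_ristSet {X : Set (Vertex m)} {v : Vertex m} (hv : v ∈ X) :
    rist Γ v ≤ ristSet Γ X :=
  le_iSup₂_of_le v hv le_rfl

theorem smul_eq_of_mem_ristSet {X : Set (Vertex m)} {g : Γ} (hg : g ∈ ristSet Γ X) {w : Vertex m}
    (hw : ∀ v ∈ X, ¬ IsPrefix v w) : g • w = w := by
  have : ristSet Γ X ≤ stabilizer Γ w := iSup₂_le fun v hv g hg => mem_rist_iff.1 hg w (hw v hv)
  exact this hg

section Faithful

variable [FaithfulSMul Γ (Vertex m)]

theorem disjoint_ristSet {n : ℕ} {X Y : Set (Vertex m)} (hX : X ⊆ layer m n) (hY : Y ⊆ layer m n)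
    (hXY : Disjoint X Y) : Disjoint (ristSet Γ X) (ristSet Γ Y) := by
  rw [Subgroup.disjoint_def]
  refine fun {g} hgX hgY => eq_one_of_forall_smul_eq (α := Vertex m) fun w => ?_
  by_cases hw : ∃ v ∈ X, IsPrefix v w
  · obtain ⟨v, hv, hvw⟩ := hw
    refine smul_eq_of_mem_ristSet hgY fun u hu huw => hXY.notMem_of_mem_left hv ?_
    rwa [hvw.eq_of_level_eq huw ((hX hv).trans (hY hu).symm)]
  · exact smul_eq_of_mem_ristSet hgX fun v hv hvw => hw ⟨v, hv, hvw⟩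

theorem disjoint_rist {v w : Vertex m} (hvw : v ≠ w) (h : v.1 = w.1) :
    Disjoint (rist Γ v) (rist Γ w) :=
  (disjoint_ristSet (n := w.1) (Set.singleton_subset_iff.2 h) (Set.singleton_subset_iff.2 rfl)
    (Set.disjoint_singleton.2 hvw)).mono (rist_le_ristSet (Set.mem_singleton v))
      (rist_le_ristSet (Set.mem_singleton w))

theorem iSupIndep_ristSet {ι : Type*} {n : ℕ} {X : ι → Set (Vertex m)}
    (hX : ∀ i, X i ⊆ layer m n) (hdisj : Pairwise fun i j => Disjoint (X i) (X j)) :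
    iSupIndep fun i => ristSet Γ (X i) := by
  intro i
  have hsup : ⨆ (j) (_ : j ≠ i), ristSet Γ (X j) = ristSet Γ (⋃ (j) (_ : j ≠ i), X j) := by
    simp only [ristSet, iSup_iUnion]
  rw [hsup]
  exact disjoint_ristSet (hX i) (Set.iUnion₂_subset fun j _ => hX j)
    (Set.disjoint_iUnion₂_right.2 fun j hj => hdisj hj.symm)

end Faithful

namespace IsTreeAction

variable (hΓ : IsTreeAction m Γ)
include hΓ

theorem map_conj_rist (g : Γ) (v : Vertex m) :
    (rist Γ v).map (MulAut.conj g).toMonoidHom = rist Γ (g • v) := by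
  ext x
  rw [Subgroup.mem_map_equiv, mem_rist_iff, mem_rist_iff]
  refine Iff.trans ?_ (MulAction.surjective g).forall.symm
  simp [mul_smul, hΓ.isPrefix_smul_iff, ← eq_inv_smul_iff (g := g⁻¹)]

theorem conj_mem_rist_smul {g x : Γ} {v : Vertex m} (hx : x ∈ rist Γ v) :
    g * x * g⁻¹ ∈ rist Γ (g • v) :=
  hΓ.map_conj_rist g v ▸ Subgroup.mem_map_of_mem _ hx

theorem normal_ristSet {X : Set (Vertex m)} (hX : ∀ g : Γ, ∀ v ∈ X, g • v ∈ X) :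
    (ristSet Γ X).Normal := by
  refine ⟨fun x hx g => ?_⟩
  have hmap : (ristSet Γ X).map (MulAut.conj g).toMonoidHom ≤ ristSet Γ X := by
    simp only [ristSet, Subgroup.map_iSup, hΓ.map_conj_rist]
    exact iSup₂_le fun v hv => rist_le_ristSet (hX g v hv)
  exact hmap (Subgroup.mem_map_of_mem _ hx)

variable [FaithfulSMul Γ (Vertex m)]

theorem commute_of_mem_rist {v w : Vertex m} (hvw : v ≠ w) (h : v.1 = w.1) {a b : Γ}
    (ha : a ∈ rist Γ v) (hb : b ∈ rist Γ w) : Commute a b := by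
  have haw : a • w = w :=
    mem_rist_iff.1 ha w fun hp => hvw (hp.eq_of_level_eq (.refl w) h)
  have hbv : b • v = v :=
    mem_rist_iff.1 hb v fun hp => hvw ((IsPrefix.refl v).eq_of_level_eq hp h)
  have hw : a * b * a⁻¹ ∈ rist Γ w := by simpa only [haw] using hΓ.conj_mem_rist_smul (g := a) hb
  have hv : b * a⁻¹ * b⁻¹ ∈ rist Γ v := by
    simpa only [hbv] using hΓ.conj_mem_rist_smul (g := b) (inv_mem ha)
  refine commutatorElement_eq_one_iff_commute.1 <|
    Subgroup.disjoint_def.1 (disjoint_rist hvw h) ?_ (mul_mem hw (inv_mem hb))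
  simpa only [commutatorElement_def, mul_assoc] using mul_mem ha hv

theorem commutator_rist_ne_bot (hrist : ∀ v : Vertex m, rist Γ v ≠ ⊥) (v : Vertex m) :
    ⁅rist Γ v, rist Γ v⁆ ≠ ⊥ := by
  intro hbot
  obtain ⟨w, hw⟩ := exists_not_le_stabilizer (α := Vertex m) (hrist v)
  obtain ⟨x, hx, hxw⟩ := SetLike.not_le_iff_exists.1 hw
  have hvw : IsPrefix v w := by
    by_contra h
    exact hxw (mem_rist_iff.1 hx w h)
  refine hrist w ((Subgroup.eq_bot_iff_forall _).2 fun y hy => ?_)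
  have hcomm : x * y = y * x :=
    commutatorElement_eq_one_iff_mul_comm.1 <| (Subgroup.eq_bot_iff_forall _).1 hbot _ <|
      Subgroup.commutator_mem_commutator hx (rist_antitone hvw hy)
  have hy' : y ∈ rist Γ (x • w) := by
    simpa only [hcomm, mul_inv_cancel_right] using hΓ.conj_mem_rist_smul (g := x) hy
  exact Subgroup.disjoint_def.1 (disjoint_rist hxw (hΓ.level_smul x w)) hy' hy

theorem commutator_rist_le {K : Subgroup Γ} [hK : K.Normal] {v : Vertex m}
    (hv : ¬ K ≤ stabilizer Γ v) : ⁅rist Γ v, rist Γ v⁆ ≤ K := by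
  obtain ⟨k, hk, hkv⟩ := SetLike.not_le_iff_exists.1 hv
  refine Subgroup.commutator_le.2 fun a ha b hb => ?_
  have hak : ⁅a, k⁆ ∈ K := mul_mem (hK.conj_mem k hk a) (inv_mem hk)
  have hcb : Commute (k * a⁻¹ * k⁻¹) b :=
    hΓ.commute_of_mem_rist hkv (hΓ.level_smul k v) (hΓ.conj_mem_rist_smul (inv_mem ha)) hb
  have hab : ⁅⁅a, k⁆, b⁆ = ⁅a, b⁆ := calc
    ⁅⁅a, k⁆, b⁆ = ⁅a * (k * a⁻¹ * k⁻¹), b⁆ := by simp only [commutatorElement_def, mul_assoc]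
    _ = ⁅a, b⁆ := by
      rw [commutatorElement_mul_left_eq_conj_mul, commutatorElement_eq_one_iff_commute.2 hcb,
        mul_one, mul_inv_cancel, one_mul]
  exact hab ▸ Subgroup.commutator_le_left K ⊤ (Subgroup.commutator_mem_commutator hak trivial)

end IsTreeAction

end Rist

section IndepFamily

variable {Γ : Type*} [Group Γ]

theorem hasIndepFamily_iff {r : ℕ} : HasIndepFamily Γ r ↔
    ∃ N : Fin r → Subgroup Γ, (∀ i, (N i).Normal) ∧ (∀ i, Infinite (N i)) ∧ iSupIndep N := by
  simp only [HasIndepFamily, iSupIndep, disjoint_iff, Set.mem_compl_iff, Set.mem_singleton_iff,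
    ne_eq]

theorem hasIndepFamily_card {ι : Type*} [Finite ι] {N : ι → Subgroup Γ} (hN : ∀ i, (N i).Normal)
    (hinf : ∀ i, Infinite (N i)) (hind : iSupIndep N) : HasIndepFamily Γ (Nat.card ι) :=
  hasIndepFamily_iff.2 ⟨N ∘ (Finite.equivFin ι).symm, fun _ => hN _, fun _ => hinf _,
    hind.comp (Finite.equivFin ι).symm.injective⟩

end IndepFamily

namespace IsTreeAction

variable {m : ℕ → ℕ} {Γ : Type*} [Group Γ] [MulAction Γ (Vertex m)] (hΓ : IsTreeAction m Γ)
  [FaithfulSMul Γ (Vertex m)]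
include hΓ

theorem not_disjoint_of_mem_orbit (hrist : ∀ v : Vertex m, rist Γ v ≠ ⊥) {K L : Subgroup Γ}
    [K.Normal] [L.Normal] {v w : Vertex m} (hw : w ∈ orbit Γ v) (hK : ¬ K ≤ stabilizer Γ v)
    (hL : ¬ L ≤ stabilizer Γ w) : ¬ Disjoint K L := by
  obtain ⟨g, rfl⟩ := hw
  have hLv : ¬ L ≤ stabilizer Γ v := fun h => hL (le_stabilizer_smul h g)
  exact fun hKL => hΓ.commutator_rist_ne_bot hrist v <| le_bot_iff.1 <|
    hKL (hΓ.commutator_rist_le hK) (hΓ.commutator_rist_le hLv)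

theorem eventually_exists_not_le_stabilizer (hm : ∀ i, 0 < m i) {K : Subgroup Γ} (hK : K ≠ ⊥) :
    ∀ᶠ n in atTop, ∃ v ∈ layer m n, ¬ K ≤ stabilizer Γ v := by
  obtain ⟨w, hw⟩ := exists_not_le_stabilizer (α := Vertex m) hK
  obtain ⟨k, hk, hkw⟩ := SetLike.not_le_iff_exists.1 hw
  filter_upwards [eventually_ge_atTop w.1] with n hn
  obtain ⟨v, hv, hwv⟩ := exists_isPrefix_mem_layer hm w hn
  refine ⟨v, hv, fun hKv => hkw ?_⟩
  have hkv : k • v = v := hKv hk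
  have hkwv : IsPrefix (k • w) v := hkv ▸ hΓ.isPrefix_smul k hwv
  exact hkwv.eq_of_level_eq hwv (hΓ.level_smul k w)

theorem eventually_card_le_card_orbits (hm : ∀ i, 0 < m i) (hrist : ∀ v : Vertex m, rist Γ v ≠ ⊥)
    {ι : Type*} [Finite ι] {N : ι → Subgroup Γ} (hN : ∀ i, (N i).Normal) (hbot : ∀ i, N i ≠ ⊥)
    (hdisj : Pairwise fun i j => Disjoint (N i) (N j)) :
    ∀ᶠ n in atTop, Nat.card ι ≤ Nat.card (orbit Γ '' layer m n) := by
  filter_upwards [eventually_all.2 fun i => hΓ.eventually_exists_not_le_stabilizer hm (hbot i)]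
    with n hn
  choose v hv hmoved using hn
  refine Nat.card_le_card_of_injective
    (fun i => (⟨orbit Γ (v i), Set.mem_image_of_mem _ (hv i)⟩ : orbit Γ '' layer m n))
    fun i j hij => ?_
  have hji : v j ∈ orbit Γ (v i) := orbit_eq_iff.1 (Subtype.ext_iff.1 hij).symm
  by_contra hne
  exact hΓ.not_disjoint_of_mem_orbit hrist hji (hmoved i) (hmoved j) (hdisj hne)

theorem hasIndepFamily_card_orbits (hrist : ∀ v : Vertex m, Infinite (rist Γ v)) (n : ℕ) :
    HasIndepFamily Γ (Nat.card (orbit Γ '' layer m n)) := by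
  have hsubset : ∀ O : orbit Γ '' layer m n, O.1 ⊆ layer m n := by
    rintro ⟨_, v, hv, rfl⟩
    exact hΓ.orbit_subset_layer hv
  have hdisj : Pairwise fun O P : orbit Γ '' layer m n => Disjoint O.1 P.1 := by
    rintro ⟨_, v, _, rfl⟩ ⟨_, w, _, rfl⟩ hvw
    exact (orbit.eq_or_disjoint v w).resolve_left fun h => hvw (Subtype.ext h)
  refine hasIndepFamily_card (fun O => ?_) (fun O => ?_) (iSupIndep_ristSet hsubset hdisj)
  · obtain ⟨_, v, _, rfl⟩ := O
    exact hΓ.normal_ristSet fun g w hw => mem_orbit_of_mem_orbit g hw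
  · obtain ⟨_, v, _, rfl⟩ := O
    have := hrist v
    exact .of_injective _ (Subgroup.inclusion_injective (rist_le_ristSet (mem_orbit_self v)))

theorem exists_isGreatest_card_orbits (hm : ∀ i, 0 < m i)
    (hrist : ∀ v : Vertex m, Infinite (rist Γ v))
    (hbdd : BddAbove (Set.range fun n => Nat.card (orbit Γ '' layer m n))) :
    ∃ n, IsGreatest {r | HasIndepFamily Γ r} (Nat.card (orbit Γ '' layer m n)) := by
  obtain ⟨n, hn⟩ := Nat.sSup_mem (Set.range_nonempty _) hbdd
  refine ⟨n, hΓ.hasIndepFamily_card_orbits hrist n, fun r hr => ?_⟩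
  obtain ⟨N, hN, hinf, hind⟩ := hasIndepFamily_iff.1 hr
  obtain ⟨k, hk⟩ := (hΓ.eventually_card_le_card_orbits hm
    (fun v => (Subgroup.nontrivial_iff_ne_bot _).1 inferInstance) hN
    (fun i => (Subgroup.nontrivial_iff_ne_bot _).1 inferInstance) hind.pairwiseDisjoint).exists
  calc
    r = Nat.card (Fin r) := (Nat.card_fin r).symm
    _ ≤ Nat.card (orbit Γ '' layer m k) := hk
    _ ≤ sSup (Set.range fun n => Nat.card (orbit Γ '' layer m n)) := le_csSup hbdd ⟨k, rfl⟩
    _ = Nat.card (orbit Γ '' layer m n) := hn.symm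

end IsTreeAction

theorem card_image_orbit_le_index {G α : Type*} [Group G] [MulAction G α] {H : Subgroup G}
    [H.FiniteIndex] {a : α} {X : Set α} (hX : X ⊆ orbit G a) :
    Nat.card (orbit H '' X) ≤ H.index := by
  have hrep : ∀ O : orbit H '' X, ∃ g : G, orbit H (g⁻¹ • a) = O := by
    rintro ⟨_, x, hx, rfl⟩
    obtain ⟨g, rfl⟩ := hX hx
    exact ⟨g⁻¹, by simp only [inv_inv]⟩
  choose g hg using hrep
  refine Nat.card_le_card_of_injective (fun O => (g O : G ⧸ H)) fun O P hOP => Subtype.ext ?_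
  rw [← hg O, ← hg P, orbit_eq_iff]
  exact ⟨⟨_, QuotientGroup.eq.1 hOP⟩, by simp [Subgroup.smul_def, mul_smul]⟩

theorem finite_iSup_of_pairwise_commute {G ι : Type*} [Group G] [Finite ι] {N : ι → Subgroup G}
    [∀ i, Finite (N i)] (hN : Pairwise fun i j => ∀ x y : G, x ∈ N i → y ∈ N j → Commute x y) :
    Finite (⨆ i, N i : Subgroup G) := by
  have := Fintype.ofFinite ι
  rw [← Subgroup.noncommPiCoprod_range (hcomm := hN)]
  exact Set.finite_range _

theorem infinite_subgroupOf {G : Type*} [Group G] {R H : Subgroup G} [Infinite R] [H.FiniteIndex] :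
    Infinite (R.subgroupOf H) := by
  by_contra hfin
  rw [not_infinite_iff_finite] at hfin
  have : Finite (H.subgroupOf R) :=
    .of_injective (fun x => (⟨⟨x.1, x.2⟩, x.1.2⟩ : R.subgroupOf H)) fun x y hxy =>
      Subtype.ext (Subtype.ext (congrArg (fun z : R.subgroupOf H => (z : G)) hxy))
  exact not_finite_iff_infinite.2 ‹_› (Finite.of_subgroup_quotient (H.subgroupOf R))

namespace IsBranchGroup

variable {m : ℕ → ℕ} {G : Type*} [Group G] [MulAction G (Vertex m)] (hG : IsBranchGroup m G)
include hG

theorem isTreeAction : IsTreeAction m G := hG.aut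

theorem faithfulSMul : FaithfulSMul G (Vertex m) where
  eq_of_smul_eq_smul {g h} hgh := inv_mul_eq_one.1 <| hG.faithful _ fun v => by
    rw [mul_smul, inv_smul_eq_iff, hgh]

theorem layer_subset_orbit {n : ℕ} {v : Vertex m} (hv : v ∈ layer m n) : layer m n ⊆ orbit G v :=
  fun w hw => hG.trans v w (hv.trans hw.symm)

theorem infinite (hm : ∀ i, 1 < m i) : Infinite G := by
  refine not_finite_iff_infinite.1 fun _ => ?_
  have hlt := lt_card_layer (Nat.card G) hm
  obtain ⟨v, hv⟩ := (Nat.card_pos_iff.1 (Nat.zero_lt_of_lt hlt)).1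
  exact hlt.not_ge <| (Nat.card_mono (Set.finite_range _) (hG.layer_subset_orbit hv)).trans
    (Finite.card_range_le _)

theorem infinite_rist (hm : ∀ i, 1 < m i) (v : Vertex m) : Infinite (rist G v) := by
  by_contra hfin
  rw [not_infinite_iff_finite] at hfin
  have := hG.faithfulSMul
  have := hG.ristFiniteIndex v.1
  have hconj : ∀ w : layer m v.1, Finite (rist G w.1) := by
    intro w
    obtain ⟨g, hg⟩ := hG.layer_subset_orbit (rfl : v ∈ layer m v.1) w.2
    rw [← hg, ← hG.isTreeAction.map_conj_rist]
    exact (Set.toFinite (rist G v : Set G)).image _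
  have hcomm : Pairwise fun u w : layer m v.1 =>
      ∀ a b : G, a ∈ rist G u.1 → b ∈ rist G w.1 → Commute a b := fun u w huw _ _ =>
    hG.isTreeAction.commute_of_mem_rist (Subtype.coe_ne_coe.2 huw) (u.2.trans w.2.symm)
  have : Finite (ristLayer m G v.1) := by
    rw [ristLayer, ristSet, iSup_subtype']
    exact finite_iSup_of_pairwise_commute hcomm
  exact not_finite_iff_infinite.2 (hG.infinite hm)
    (Finite.of_subgroup_quotient (ristLayer m G v.1))

theorem exists_isGreatest_card_orbits (hm : ∀ i, 1 < m i) (H : Subgroup G) [H.FiniteIndex] :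
    ∃ n, IsGreatest {r | HasIndepFamily H r} (Nat.card (orbit H '' layer m n)) := by
  have hm₀ : ∀ i, 0 < m i := fun i => Nat.zero_lt_of_lt (hm i)
  have := hG.faithfulSMul
  refine (hG.isTreeAction.subgroup H).exists_isGreatest_card_orbits hm₀ (fun v => ?_)
    ⟨H.index, ?_⟩
  · have := hG.infinite_rist hm v
    rw [rist_subgroup]
    exact infinite_subgroupOf
  · rintro _ ⟨n, rfl⟩
    have hv : (⟨n, fun i => ⟨0, hm₀ i⟩⟩ : Vertex m) ∈ layer m n := rfl
    exact card_image_orbit_le_index (hG.layer_subset_orbit hv)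

end IsBranchGroup

theorem orbitsOn_eq_image_orbit {m : ℕ → ℕ} {G : Type*} [Group G] [MulAction G (Vertex m)]
    (H : Subgroup G) (X : Set (Vertex m)) : orbitsOn G H X = orbit H '' X := by
  refine Set.image_congr fun v _ => Set.ext fun w => ?_
  simp only [subOrbit, Set.mem_ofPred_eq, mem_orbit_iff, Subtype.exists, Subgroup.mk_smul,
    exists_prop]

theorem card_modEq_card_range {X Y : Type*} [Finite X] (f : X → Y) {k : ℕ}
    (hf : ∀ x, Nat.card {x' // f x' = f x} ≡ 1 [MOD k]) :
    Nat.card X ≡ Nat.card (Set.range f) [MOD k] := by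
  have := Fintype.ofFinite (Set.range f)
  have hfib : ∀ y : Set.range f, Nat.card {x // Set.rangeFactorization f x = y} ≡ 1 [MOD k] := by
    rintro ⟨_, x, rfl⟩
    simpa only [Subtype.ext_iff, Set.rangeFactorization_coe] using hf x
  calc
    Nat.card X = ∑ y, Nat.card {x // Set.rangeFactorization f x = y} := by
      rw [← Nat.card_sigma, Nat.card_congr (Equiv.sigmaFiberEquiv (Set.rangeFactorization f))]
    _ ≡ ∑ _y : Set.range f, 1 [MOD k] := .sum fun y _ => hfib y
    _ = Nat.card (Set.range f) := by simp

theorem pow_modEq_one_sub_one {p : ℕ} (hp : 0 < p) (k : ℕ) : p ^ k ≡ 1 [MOD p - 1] := by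
  simpa using (Nat.modEq_sub hp).pow k

theorem exists_card_orbit_eq_pow {p : ℕ} (hp : p.Prime) {Γ α : Type*} [Group Γ] [MulAction Γ α]
    {a : α} [Finite (orbit Γ a)] (hpow : ∀ g : Γ, ∃ e : ℕ, ∀ b ∈ orbit Γ a, g ^ p ^ e • b = b) :
    ∃ k, Nat.card (orbit Γ a) = p ^ k := by
  have := Fact.mk hp
  let φ := toPermHom Γ (orbit Γ a)
  have hφ : IsPGroup p φ.range := by
    rintro ⟨_, g, rfl⟩
    obtain ⟨e, he⟩ := hpow g
    refine ⟨e, Subtype.ext (Equiv.ext fun b => Subtype.ext ?_)⟩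
    rw [Subgroup.coe_pow, ← map_pow]
    exact he b b.2
  obtain ⟨k, hk⟩ := IsPGroup.iff_card.1 hφ
  have hker : φ.ker ≤ stabilizer Γ a := fun g hg =>
    congrArg Subtype.val (Equiv.congr_fun hg ⟨a, mem_orbit_self a⟩)
  have hdvd : Nat.card (orbit Γ a) ∣ p ^ k := by
    rw [Nat.card_coe_set_eq, ← index_stabilizer, ← hk, ← Subgroup.index_ker]
    exact Subgroup.index_dvd_of_le hker
  obtain ⟨j, -, hj⟩ := (Nat.dvd_prime_pow hp).1 hdvd
  exact ⟨j, hj⟩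

theorem IsTreeAction.card_layer_modEq_card_orbits {p : ℕ} (hp : p.Prime) {m : ℕ → ℕ} {Γ : Type*}
    [Group Γ] [MulAction Γ (Vertex m)] (hΓ : IsTreeAction m Γ) {n : ℕ}
    (hpow : ∀ g : Γ, ∃ e : ℕ, ∀ v ∈ layer m n, g ^ p ^ e • v = v) :
    Nat.card (layer m n) ≡ Nat.card (orbit Γ '' layer m n) [MOD p - 1] := by
  rw [Set.image_eq_range]
  refine card_modEq_card_range _ fun v => ?_
  have hsub := hΓ.orbit_subset_layer v.2
  have : Finite (orbit Γ v.1) := (Set.toFinite (layer m n)).subset hsub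
  obtain ⟨k, hk⟩ := exists_card_orbit_eq_pow hp (a := v.1) fun g =>
    (hpow g).imp fun e he w hw => he w (hsub hw)
  have hfib : {w : layer m n // orbit Γ w.1 = orbit Γ v.1} ≃ orbit Γ v.1 :=
    (Equiv.subtypeEquivRight fun w => orbit_eq_iff).trans
      (Equiv.subtypeSubtypeEquivSubtype (hsub ·))
  rw [Nat.card_congr hfib, hk]
  exact pow_modEq_one_sub_one hp.pos k

theorem card_layer_modEq_one {m : ℕ → ℕ} {k : ℕ} (hm : ∀ i, m i ≡ 1 [MOD k]) (n : ℕ) :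
    Nat.card (layer m n) ≡ 1 [MOD k] := by
  rw [card_layer]
  exact Nat.ModEq.prod_one fun i _ => hm i

theorem orbits_mod_p_sub_one_general {p : ℕ} (hp : p.Prime) {m : ℕ → ℕ} (hm : ∀ i, 1 < m i)
    (hmp : ∀ i, m i ≡ 1 [MOD p - 1]) {G : Type*} [Group G] [MulAction G (Vertex m)]
    (haut : IsTreeAction m G) (H : Subgroup G)
    (hpgrp : ∀ n, ∀ h ∈ H, ∃ e : ℕ, ∀ v ∈ layer m n, h ^ p ^ e • v = v) :
    (∀ n, Nat.card (orbitsOn G H (layer m n)) ≡ 1 [MOD p - 1]) ∧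
    (IsBranchGroup m G → H.FiniteIndex →
      ∃ b, IsGreatest {r | HasIndepFamily H r} b ∧ b ≡ 1 [MOD p - 1]) := by
  have horb : ∀ n, Nat.card (orbit H '' layer m n) ≡ 1 [MOD p - 1] := fun n =>
    ((haut.subgroup H).card_layer_modEq_card_orbits hp fun h => hpgrp n h h.2).symm.trans
      (card_layer_modEq_one hmp n)
  refine ⟨fun n => (orbitsOn_eq_image_orbit H (layer m n)).symm ▸ horb n, fun hG _ => ?_⟩
  obtain ⟨n, hn⟩ := hG.exists_isGreatest_card_orbits hm H
  exact ⟨_, hn, horb n⟩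

/-- **Lemma.** Let `T` be the `p`-ary tree (`p` prime) and let `H` be a group of
automorphisms of `T` acting on each layer as a `p`-group (every element of the image
in the symmetric group of each layer has `p`-power order).  Then the number of
`H`-orbits on each layer is `≡ 1 (mod p-1)`.  If moreover `H` has finite index in a
branch group `G` on `T`, then `b(H) ≡ 1 (mod p-1)`. -/
theorem orbits_mod_p_sub_one
    (p : ℕ) (hp : p.Prime)
    (G : Type*) [Group G] [MulAction G (Vertex (fun _ => p))]
    (hfaith : ∀ g : G, (∀ v : Vertex (fun _ => p), g • v = v) → g = 1)
    (haut : ∀ (g : G) (v w : Vertex (fun _ => p)),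
      Vertex.IsChild v w ↔ Vertex.IsChild (g • v) (g • w))
    (H : Subgroup G)
    (hpgrp : ∀ (n : ℕ), ∀ h ∈ H, ∃ e : ℕ,
      ∀ v : Vertex (fun _ => p), v.1 = n → (h ^ p ^ e) • v = v) :
    (∀ n : ℕ, Nat.card (orbitsOn G H (layer (fun _ => p) n)) ≡ 1 [MOD p - 1]) ∧
    (IsBranchGroup (fun _ => p) G → H.FiniteIndex →
      ∀ b : ℕ, IsGreatest {r : ℕ | HasIndepFamily ↥H r} b → b ≡ 1 [MOD p - 1]) := by
  have h := orbits_mod_p_sub_one_general hp (fun _ => hp.one_lt) (fun _ => Nat.modEq_sub hp.pos)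
    haut H hpgrp
  refine ⟨h.1, fun hG hH b hb => ?_⟩
  obtain ⟨b', hb', hmod⟩ := h.2 hG hH
  exact hb.unique hb' ▸ hmod
end

section
/- Let 𝔠 be the class of all groups G with no non-trivial abelian normal subgroups and with b(G) finite. Let H_1,…,H_n be groups in 𝔠 and let H be a subgroup of finite index in the direct product D = H_1 × ⋯ × H_n such that each projection ρ_j : H → H_j is surjective. Then b(H) = b(H_1) + ⋯ + b(H_n). -/
/-!  Common definitions: rooted trees of type `(m n)`, tree automorphisms,
rigid stabilizers, branch groups, and auxiliary notions. -/

universe u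

/-!
Embed `Hⱼ` in the direct product as its `j`-th factor and put `Kⱼ = K ∩ Hⱼ`, which has finite
index in `Hⱼ`.

Independent families in the `Hⱼ` together form one in the product, and intersecting with `K` keeps
its members infinite; this gives `b(K) ≥ ∑ b(Hⱼ)`.

Conversely, let `M` be an infinite normal subgroup of `K`. Some projection `ρⱼ(M)` is infinite,
hence so is `S = ρⱼ(M) ∩ Kⱼ`. Since `[ρⱼ(M), Kⱼ] = [M, Kⱼ] ≤ M ∩ Hⱼ`, finiteness of `M ∩ Hⱼ` would
make `S` an infinite normal subgroup of `Hⱼ` with finite derived subgroup `S'`. Centralizers of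
finite normal subgroups have finite index, so `S ∩ C(S')` would still be infinite; but its
commutators lie in the abelian normal subgroup `S' ∩ C(S') = 1`, so it is abelian, hence trivial.
Thus `M` meets some `Hⱼ` in an infinite normal subgroup of `Hⱼ`. The members of an independent
family in `K` which meet a given `Hⱼ` in this way yield an independent family in `Hⱼ`, so there are
at most `b(Hⱼ)` of them.
-/

section FiniteIndex

variable {G G' : Type*} [Group G] [Group G']

theorem infinite_map_iff_of_injective {f : G →* G'} (hf : Function.Injective f) (P : Subgroup G) :
    Infinite (P.map f) ↔ Infinite P :=
  (P.equivMapOfInjective f hf).toEquiv.infinite_iff.symm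

theorem finite_inf_iff_of_finiteIndex (P K : Subgroup G) [K.FiniteIndex] :
    Finite ↥(P ⊓ K) ↔ Finite P := by
  have e := (K.subgroupOf P).equivMapOfInjective P.subtype P.subtype_injective
  rw [Subgroup.subgroupOf_map_subtype, inf_comm] at e
  have hindex : (K.subgroupOf P).FiniteIndex := inferInstance
  rw [← e.toEquiv.finite_iff, Subgroup.finite_iff_finite_and_finiteIndex (K.subgroupOf P),
    and_iff_left hindex]

theorem infinite_subgroupOf_of_finiteIndex (P K : Subgroup G) [K.FiniteIndex] [Infinite P] :
    Infinite (P.subgroupOf K) := by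
  rw [← infinite_map_iff_of_injective K.subtype_injective, Subgroup.subgroupOf_map_subtype,
    ← not_finite_iff_infinite, finite_inf_iff_of_finiteIndex, not_finite_iff_infinite]
  infer_instance

theorem finiteIndex_centralizer_of_finite (Q : Subgroup G) [Q.Normal] [Finite Q] :
    (Subgroup.centralizer (Q : Set G)).FiniteIndex := by
  have : Finite (MulAut Q) :=
    Finite.of_injective (fun e : MulAut Q => (e : Q → Q)) DFunLike.coe_injective
  have hker : Q.normalizerMonoidHom.ker.index ≠ 0 := Subgroup.FiniteIndex.index_ne_zero
  rw [Subgroup.normalizerMonoidHom_ker, ← Subgroup.relIndex, Subgroup.normalizer_eq_top,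
    Subgroup.relIndex_top_right] at hker
  exact ⟨hker⟩

end FiniteIndex

section NoAbelianNormal

/-- The group `G` has no non-trivial abelian normal subgroup: the first of the two conditions
defining the class `𝔠`. -/
def NoAbelianNormal (G : Type*) [Group G] : Prop :=
  ∀ A : Subgroup G, A.Normal → (∀ a ∈ A, ∀ b ∈ A, a * b = b * a) → A = ⊥

variable {G : Type*} [Group G]

theorem NoAbelianNormal.eq_bot_of_commutator_eq_bot (hG : NoAbelianNormal G) (A : Subgroup G)
    [hA : A.Normal] (h : ⁅A, A⁆ = ⊥) : A = ⊥ :=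
  hG A hA fun _ ha _ hb =>
    have hcentral := Subgroup.commutator_eq_bot_iff_le_centralizer.1 h
    (Subgroup.mem_centralizer_iff.1 (hcentral ha) _ hb).symm

theorem NoAbelianNormal.inf_centralizer_eq_bot (hG : NoAbelianNormal G) (Q : Subgroup G)
    [Q.Normal] : Q ⊓ Subgroup.centralizer Q = ⊥ :=
  hG _ inferInstance fun a ha _ hb => Subgroup.mem_centralizer_iff.1 hb.2 a ha.1

theorem NoAbelianNormal.finite_of_finite_commutator (hG : NoAbelianNormal G) (S : Subgroup G)
    [S.Normal] [Finite ↥⁅S, S⁆] : Finite S := by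
  let C := Subgroup.centralizer ((⁅S, S⁆ : Subgroup G) : Set G)
  have : C.FiniteIndex := finiteIndex_centralizer_of_finite ⁅S, S⁆
  have hcomm : ⁅S ⊓ C, S ⊓ C⁆ = ⊥ := by
    rw [eq_bot_iff, ← hG.inf_centralizer_eq_bot ⁅S, S⁆]
    exact le_inf (Subgroup.commutator_mono inf_le_left inf_le_left)
      ((Subgroup.commutator_le_right _ _).trans inf_le_right)
  rw [← finite_inf_iff_of_finiteIndex S C, hG.eq_bot_of_commutator_eq_bot (S ⊓ C) hcomm]
  infer_instance

end NoAbelianNormal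

section Independence

variable {G G' κ : Type*} [Group G] [Group G']

theorem disjoint_subgroup_map_iff {f : G →* G'} (hf : Function.Injective f) {P Q : Subgroup G} :
    Disjoint (P.map f) (Q.map f) ↔ Disjoint P Q := by
  rw [disjoint_iff, disjoint_iff, ← Subgroup.map_inf P Q f hf,
    Subgroup.map_eq_bot_iff_of_injective _ hf]

theorem iSupIndep_subgroup_map_iff {f : G →* G'} (hf : Function.Injective f)
    {N : κ → Subgroup G} : iSupIndep (fun i => (N i).map f) ↔ iSupIndep N := by
  simp only [iSupIndep_def, ← Subgroup.map_iSup, disjoint_subgroup_map_iff hf]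

theorem iSupIndep_subgroup_comap {f : G →* G'} (hf : Function.Injective f)
    {N : κ → Subgroup G'} (hN : iSupIndep N) : iSupIndep fun i => (N i).comap f :=
  (iSupIndep_subgroup_map_iff hf).1 (hN.mono fun i => Subgroup.map_comap_le f (N i))

theorem hasIndepFamily_iff_exists_iSupIndep {r : ℕ} :
    HasIndepFamily G r ↔
      ∃ N : Fin r → Subgroup G, (∀ i, (N i).Normal) ∧ (∀ i, Infinite (N i)) ∧ iSupIndep N := by
  simp only [HasIndepFamily, iSupIndep, disjoint_iff, Set.mem_compl_singleton_iff]

theorem hasIndepFamily_card_of_iSupIndep [Fintype κ] {N : κ → Subgroup G}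
    (hnormal : ∀ i, (N i).Normal) (hinf : ∀ i, Infinite (N i)) (hindep : iSupIndep N) :
    HasIndepFamily G (Fintype.card κ) :=
  let e := (Fintype.equivFin κ).symm
  hasIndepFamily_iff_exists_iSupIndep.2
    ⟨N ∘ e, fun i => hnormal (e i), fun i => hinf (e i), hindep.comp e.injective⟩

theorem HasIndepFamily.of_finiteIndex {r : ℕ} (h : HasIndepFamily G r) (K : Subgroup G)
    [K.FiniteIndex] : HasIndepFamily K r := by
  obtain ⟨N, hnormal, hinf, hindep⟩ := hasIndepFamily_iff_exists_iSupIndep.1 h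
  exact hasIndepFamily_iff_exists_iSupIndep.2 ⟨fun i => (N i).subgroupOf K,
    fun i => inferInstance, fun i => infinite_subgroupOf_of_finiteIndex (N i) K,
    iSupIndep_subgroup_comap K.subtype_injective hindep⟩

end Independence

section DirectProduct

open scoped commutatorElement

variable {ι : Type*} [DecidableEq ι] {H : ι → Type*} [∀ j, Group (H j)]

theorem mulSingle_conj (g : ∀ j, H j) (j : ι) (x : H j) :
    MonoidHom.mulSingle H j (g j * x * (g j)⁻¹) = g * MonoidHom.mulSingle H j x * g⁻¹ := by
  ext l
  obtain rfl | hl := eq_or_ne l j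
  · simp
  · simp [Pi.mulSingle_eq_of_ne hl]

theorem mulSingle_commutatorElement (g : ∀ j, H j) (j : ι) (x : H j) :
    MonoidHom.mulSingle H j ⁅g j, x⁆ = ⁅g, MonoidHom.mulSingle H j x⁆ := by
  rw [commutatorElement_def, map_mul, mulSingle_conj, map_inv, commutatorElement_def]

theorem normal_map_mulSingle {j : ι} (N : Subgroup (H j)) [hN : N.Normal] :
    (N.map (MonoidHom.mulSingle H j)).Normal where
  conj_mem := by
    rintro _ ⟨x, hx, rfl⟩ g
    exact ⟨g j * x * (g j)⁻¹, hN.conj_mem x hx (g j), mulSingle_conj g j x⟩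

theorem iSupIndep_map_mulSingle {κ : ι → Type*} {N : ∀ j, κ j → Subgroup (H j)}
    (hN : ∀ j, iSupIndep (N j)) :
    iSupIndep fun p : Σ j, κ j => (N p.1 p.2).map (MonoidHom.mulSingle H p.1) := by
  rintro ⟨j, i⟩
  have hothers : ⨆ q : Σ j, κ j, ⨆ _ : q ≠ ⟨j, i⟩, (N q.1 q.2).map (MonoidHom.mulSingle H q.1) ≤
      (⨆ l, ⨆ _ : l ≠ i, N j l).comap (Pi.evalMonoidHom H j) := by
    refine iSup₂_le ?_
    rintro ⟨j', l⟩ hne _ ⟨x, hx, rfl⟩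
    obtain rfl | hj := eq_or_ne j j'
    · have hl : l ≠ i := fun h => hne (h ▸ rfl)
      simpa using le_iSup₂ (f := fun l (_ : l ≠ i) => N j l) l hl hx
    · simp [Pi.mulSingle_eq_of_ne hj]
  rw [Subgroup.disjoint_def]
  rintro _ ⟨x, hx, rfl⟩ hmem
  have hx' : x ∈ ⨆ l, ⨆ _ : l ≠ i, N j l := by simpa using hothers hmem
  rw [Subgroup.disjoint_def.1 (hN j i) hx hx', map_one]

/-- The intersection of a subgroup `L` of a direct product with the `j`-th direct factor, regarded
as a subgroup of `H j`. -/
def factorPart (L : Subgroup (∀ j, H j)) (j : ι) : Subgroup (H j) :=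
  L.comap (MonoidHom.mulSingle H j)

theorem mem_factorPart {L : Subgroup (∀ j, H j)} {j : ι} {x : H j} :
    x ∈ factorPart L j ↔ MonoidHom.mulSingle H j x ∈ L :=
  Iff.rfl

instance finiteIndex_factorPart (K : Subgroup (∀ j, H j)) [K.FiniteIndex] (j : ι) :
    (factorPart K j).FiniteIndex where
  index_ne_zero := by
    rw [factorPart, Subgroup.index_comap]
    exact Subgroup.FiniteIndex.index_ne_zero

theorem iSupIndep_factorPart {κ : Type*} {L : κ → Subgroup (∀ j, H j)} (hL : iSupIndep L) (j : ι) :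
    iSupIndep fun i => factorPart (L i) j :=
  iSupIndep_subgroup_comap (Pi.mulSingle_injective j) hL

variable {K L : Subgroup (∀ j, H j)} {j : ι}

theorem normal_factorPart (hKL : K ≤ Subgroup.normalizer L)
    (hj : K.map (Pi.evalMonoidHom H j) = ⊤) : (factorPart L j).Normal where
  conj_mem x hx g := by
    obtain ⟨k, hk, rfl⟩ : g ∈ K.map (Pi.evalMonoidHom H j) := hj ▸ Subgroup.mem_top g
    rw [mem_factorPart, Pi.evalMonoidHom_apply, mulSingle_conj]
    exact Subgroup.le_normalizer_iff.1 hKL k hk _ hx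

theorem commutator_map_eval_factorPart_le (hKL : K ≤ Subgroup.normalizer L) :
    ⁅L.map (Pi.evalMonoidHom H j), factorPart K j⁆ ≤ factorPart L j := by
  rw [Subgroup.commutator_le]
  rintro _ ⟨m, hm, rfl⟩ x hx
  have hconj := Subgroup.le_normalizer_iff.1 hKL _ hx _ (inv_mem hm)
  rw [mem_factorPart, Pi.evalMonoidHom_apply, mulSingle_commutatorElement]
  simpa only [commutatorElement_def, mul_assoc] using mul_mem hm hconj

end DirectProduct

section Subdirect

variable {G G' : Type*} [Group G] [Group G']

theorem le_normalizer_map_subtype {K : Subgroup G} (M : Subgroup K) [M.Normal] :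
    K ≤ Subgroup.normalizer (M.map K.subtype) := by
  simpa only [Subgroup.normalizer_eq_top, ← MonoidHom.range_eq_map, Subgroup.range_subtype] using
    Subgroup.le_normalizer_map (H := M) K.subtype

theorem normal_map_of_le_normalizer {K L : Subgroup G} (hKL : K ≤ Subgroup.normalizer L)
    {f : G →* G'} (hf : K.map f = ⊤) : (L.map f).Normal := by
  rw [← Subgroup.normalizer_eq_top_iff, eq_top_iff, ← hf]
  exact (Subgroup.map_mono hKL).trans (Subgroup.le_normalizer_map f)

variable {ι : Type*} {H : ι → Type*} [∀ j, Group (H j)]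

theorem exists_infinite_map_eval [Finite ι] (L : Subgroup (∀ j, H j)) [Infinite L] :
    ∃ j, Infinite (L.map (Pi.evalMonoidHom H j)) := by
  by_contra! hfin
  refine not_finite_iff_infinite.2 ‹Infinite L› (Finite.of_injective
    (fun (x : L) (j : ι) => (⟨x.1 j, x.1, x.2, rfl⟩ : L.map (Pi.evalMonoidHom H j))) ?_)
  intro x y hxy
  ext j
  exact congrArg Subtype.val (congrFun hxy j)

variable [DecidableEq ι] {K L : Subgroup (∀ j, H j)} [K.FiniteIndex]

theorem infinite_factorPart_of_infinite_map_eval {j : ι} (hnoab : NoAbelianNormal (H j))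
    (hj : K.map (Pi.evalMonoidHom H j) = ⊤) (hKL : K ≤ Subgroup.normalizer L)
    (hinf : Infinite (L.map (Pi.evalMonoidHom H j))) : Infinite (factorPart L j) := by
  by_contra! hfin
  let S := L.map (Pi.evalMonoidHom H j) ⊓ factorPart K j
  have := normal_map_of_le_normalizer hKL hj
  have := normal_factorPart (Subgroup.le_normalizer (H := K)) hj
  have hcomm : ⁅S, S⁆ ≤ factorPart L j :=
    (Subgroup.commutator_mono inf_le_left inf_le_right).trans
      (commutator_map_eval_factorPart_le hKL)
  have : Finite ↥⁅S, S⁆ := Finite.of_injective _ (Subgroup.inclusion_injective hcomm)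
  have : Finite S := hnoab.finite_of_finite_commutator S
  exact not_finite_iff_infinite.2 hinf ((finite_inf_iff_of_finiteIndex _ (factorPart K j)).1 this)

theorem exists_infinite_factorPart [Finite ι] (hnoab : ∀ j, NoAbelianNormal (H j))
    (hsurj : ∀ j, K.map (Pi.evalMonoidHom H j) = ⊤) (hKL : K ≤ Subgroup.normalizer L)
    [Infinite L] : ∃ j, Infinite (factorPart L j) :=
  (exists_infinite_map_eval L).imp fun j =>
    infinite_factorPart_of_infinite_map_eval (hnoab j) (hsurj j) hKL

end Subdirect

section Bounds

variable {ι : Type*} [Fintype ι] {H : ι → Type*} [∀ j, Group (H j)] {B : ι → ℕ}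

theorem HasIndepFamily.pi (h : ∀ j, HasIndepFamily (H j) (B j)) :
    HasIndepFamily (∀ j, H j) (∑ j, B j) := by
  classical
  choose N hnormal hinf hindep using fun j => hasIndepFamily_iff_exists_iSupIndep.1 (h j)
  have hinf_map (p : Σ j, Fin (B j)) :
      Infinite ((N p.1 p.2).map (MonoidHom.mulSingle H p.1)) :=
    (infinite_map_iff_of_injective (Pi.mulSingle_injective p.1) _).2 (hinf p.1 p.2)
  simpa only [Fintype.card_sigma, Fintype.card_fin] using
    hasIndepFamily_card_of_iSupIndep (κ := Σ j, Fin (B j))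
      (fun p => normal_map_mulSingle (N p.1 p.2)) hinf_map (iSupIndep_map_mulSingle hindep)

theorem HasIndepFamily.le_sum {K : Subgroup (∀ j, H j)} [K.FiniteIndex]
    (hnoab : ∀ j, NoAbelianNormal (H j))
    (hB : ∀ j, B j ∈ upperBounds {r | HasIndepFamily (H j) r})
    (hsurj : ∀ j, K.map (Pi.evalMonoidHom H j) = ⊤) {r : ℕ} (h : HasIndepFamily K r) :
    r ≤ ∑ j, B j := by
  classical
  obtain ⟨M, hnormal, hinf, hindep⟩ := hasIndepFamily_iff_exists_iSupIndep.1 h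
  let L (i : Fin r) : Subgroup (∀ j, H j) := (M i).map K.subtype
  have hL_inf (i : Fin r) : Infinite (L i) :=
    (infinite_map_iff_of_injective K.subtype_injective (M i)).2 (hinf i)
  have hL_indep : iSupIndep L := (iSupIndep_subgroup_map_iff K.subtype_injective).2 hindep
  choose f hf using fun i =>
    exists_infinite_factorPart hnoab hsurj (le_normalizer_map_subtype (M i)) (L := L i)
  have hfiber (j : ι) : HasIndepFamily (H j) (Fintype.card {i // f i = j}) :=
    hasIndepFamily_card_of_iSupIndep (N := fun i : {i // f i = j} => factorPart (L i) j)
      (fun i => normal_factorPart (le_normalizer_map_subtype (M i)) (hsurj j))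
      (by rintro ⟨i, rfl⟩; exact hf i)
      ((iSupIndep_factorPart hL_indep j).comp Subtype.val_injective)
  calc r = Fintype.card (Σ j, {i // f i = j}) := by
        rw [Fintype.card_congr (Equiv.sigmaFiberEquiv f), Fintype.card_fin]
    _ = ∑ j, Fintype.card {i // f i = j} := Fintype.card_sigma
    _ ≤ ∑ j, B j := Finset.sum_le_sum fun j _ => hB j (hfiber j)

end Bounds

theorem b_of_subdirect_product_general {ι : Type*} [Fintype ι] {H : ι → Type*}
    [∀ j, Group (H j)] (hnoab : ∀ j, NoAbelianNormal (H j)) {B : ι → ℕ}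
    (hB : ∀ j, IsGreatest {r : ℕ | HasIndepFamily (H j) r} (B j))
    (K : Subgroup (∀ j, H j)) [K.FiniteIndex]
    (hsurj : ∀ j, Function.Surjective fun k : K => (k : ∀ j, H j) j) :
    IsGreatest {r : ℕ | HasIndepFamily K r} (∑ j, B j) := by
  have hmap (j : ι) : K.map (Pi.evalMonoidHom H j) = ⊤ :=
    (Subgroup.eq_top_iff' _).2 fun x =>
      let ⟨k, hk⟩ := hsurj j x
      ⟨k, k.2, hk⟩
  exact ⟨(HasIndepFamily.pi fun j => (hB j).1).of_finiteIndex K,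
    fun _ hr => hr.le_sum hnoab (fun j => (hB j).2) hmap⟩

/-- **Lemma.** Let `H₁, …, Hₙ` be infinite groups with no non-trivial abelian normal
subgroups and with `b(Hⱼ)` finite, and let `H` be a finite-index subgroup of
`D = H₁ × ⋯ × Hₙ` projecting onto each factor.  Then `b(H) = b(H₁) + ⋯ + b(Hₙ)`. -/
theorem b_of_subdirect_product
    (n : ℕ) (H : Fin n → Type u) [∀ j, Group (H j)] [∀ j, Infinite (H j)]
    (hnoab : ∀ (j : Fin n) (A : Subgroup (H j)), A.Normal →
      (∀ a ∈ A, ∀ b ∈ A, a * b = b * a) → A = ⊥)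
    (B : Fin n → ℕ) (hB : ∀ j, IsGreatest {r : ℕ | HasIndepFamily (H j) r} (B j))
    (K : Subgroup (∀ j, H j)) [K.FiniteIndex]
    (hsurj : ∀ j : Fin n, Function.Surjective (fun k : ↥K => (k : ∀ j, H j) j)) :
    IsGreatest {r : ℕ | HasIndepFamily ↥K r} (∑ j, B j) :=
  b_of_subdirect_product_general hnoab hB K hsurj
end
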